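/- A subset of ℝ is meagre with respect to the half-open (lower limit) topology if and only if it is meagre with respect to the standard topology of ℝ. In particular, a subset of ℝ is comeagre (residual) in the half-open topology if and only if it is comeagre in the standard topology. -/

import Mathlib

/-- The half-open (lower limit) topology on `ℝ`, generated by the intervals `[a, b)`. -/
def halfOpenTopology : TopologicalSpace ℝ :=
  TopologicalSpace.generateFrom {I : Set ℝ | ∃ a b : ℝ, I = Set.Ico a b}

/-!
Two topologies on the same set that have the same sets with nonempty interior have the same
residual filter: if `U` is open and dense for one of them, then its interior for the other one is
dense for the other one. In a densely ordered linear order every nonempty `[a, b)` contains the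
nonempty `(a, b)`, which in turn contains every `[c, b)` with `a < c < b`; hence the lower limit
topology and the order topology have the same sets with nonempty interior.
-/

open Set TopologicalSpace Topology

section Residual

variable {X : Type*} {t s : TopologicalSpace X}

local notation "interior[" τ "]" => @interior _ τ

theorem dense_interior_of_interior_nonempty_iff
    (h : ∀ A : Set X, (interior[t] A).Nonempty ↔ (interior[s] A).Nonempty)
    {U : Set X} (hUo : IsOpen[t] U) (hUd : @Dense X t U) : @Dense X s (interior[s] U) := by
  refine (@dense_iff_inter_open X s _).2 fun V hVo hVne => ?_
  have hV : (interior[t] V).Nonempty := (h V).2 (by rwa [@IsOpen.interior_eq X s V hVo])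
  have hVU_open : IsOpen[t] (interior[t] V ∩ U) :=
    @IsOpen.inter X t _ _ (@isOpen_interior X t V) hUo
  have hVU : (interior[t] V ∩ U).Nonempty :=
    @Dense.inter_open_nonempty X t U hUd _ (@isOpen_interior X t V) hV
  have hVU_interior : (interior[s] (interior[t] V ∩ U)).Nonempty :=
    (h _).1 (by rwa [@IsOpen.interior_eq X t _ hVU_open])
  refine hVU_interior.mono (subset_inter ?_ ?_)
  · exact (@interior_subset X s _).trans (inter_subset_left.trans (@interior_subset X t V))
  · exact @interior_mono X s _ _ inter_subset_right

theorem residual_le_residual_of_interior_nonempty_iff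
    (h : ∀ A : Set X, (interior[t] A).Nonempty ↔ (interior[s] A).Nonempty) :
    @residual X s ≤ @residual X t := by
  refine (Filter.le_countableGenerate_iff_of_countableInterFilter).2 fun U ⟨hUo, hUd⟩ => ?_
  have hU : interior[s] U ∈ @residual X s :=
    @residual_of_dense_open X s _ (@isOpen_interior X s U)
      (dense_interior_of_interior_nonempty_iff h hUo hUd)
  exact Filter.mem_of_superset hU (@interior_subset X s U)

theorem residual_eq_residual_of_interior_nonempty_iff
    (h : ∀ A : Set X, (interior[t] A).Nonempty ↔ (interior[s] A).Nonempty) :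
    @residual X t = @residual X s :=
  le_antisymm (residual_le_residual_of_interior_nonempty_iff fun A => (h A).symm)
    (residual_le_residual_of_interior_nonempty_iff h)

end Residual

/-- The lower limit topology on a preorder, generated by the intervals `[a, b)`. It extends
`halfOpenTopology` to other orders, and is not an instance so that it can be compared with the
order topology. If there is a greatest element `⊤`, the only open set containing `⊤` is `univ`. -/
abbrev lowerLimitTopology (α : Type*) [Preorder α] : TopologicalSpace α :=
  generateFrom {I : Set α | ∃ a b : α, I = Ico a b}

theorem isOpen_Ico_lowerLimitTopology {α : Type*} [Preorder α] (a b : α) :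
    IsOpen[lowerLimitTopology α] (Ico a b) :=
  isOpen_generateFrom_of_mem ⟨a, b, rfl⟩

section LowerLimit

variable {α : Type*} [LinearOrder α]

theorem isTopologicalBasis_lowerLimitTopology :
    @IsTopologicalBasis α (lowerLimitTopology α) (insert univ {I | ∃ a b : α, I = Ico a b}) := by
  refine @isTopologicalBasis_of_subbasis_of_inter α (lowerLimitTopology α) _ rfl ?_
  rintro _ ⟨a, b, rfl⟩ _ ⟨c, d, rfl⟩
  exact ⟨a ⊔ c, b ⊓ d, Ico_inter_Ico⟩

variable [TopologicalSpace α] [OrderTopology α] [DenselyOrdered α]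

theorem interior_nonempty_of_isOpen_lowerLimitTopology {V : Set α}
    (hVo : IsOpen[lowerLimitTopology α] V) (hVne : V.Nonempty) : (interior V).Nonempty := by
  obtain ⟨x, hx⟩ := hVne
  obtain ⟨W, rfl | ⟨a, b, rfl⟩, hxW, hWV⟩ :=
    @IsTopologicalBasis.exists_subset_of_mem_open α (lowerLimitTopology α) _
      isTopologicalBasis_lowerLimitTopology _ _ hx hVo
  · exact ⟨x, interior_maximal hWV isOpen_univ hxW⟩
  · have hab : (Ioo a b).Nonempty := nonempty_Ioo.2 (hxW.1.trans_lt hxW.2)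
    exact hab.mono (interior_maximal (Ioo_subset_Ico_self.trans hWV) isOpen_Ioo)

theorem interior_lowerLimitTopology_nonempty_of_isOpen {V : Set α}
    (hVo : IsOpen V) (hVne : V.Nonempty) : (@interior α (lowerLimitTopology α) V).Nonempty := by
  rcases subsingleton_or_nontrivial α with _ | _
  · rwa [Subsingleton.elim (lowerLimitTopology α) ‹_›, hVo.interior_eq]
  · obtain ⟨a, b, hab, hV⟩ := hVo.exists_Ioo_subset hVne
    obtain ⟨c, hac, hcb⟩ := exists_between hab
    have hcV : Ico c b ⊆ V := (Ico_subset_Ioo_left hac).trans hV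
    exact (nonempty_Ico.2 hcb).mono
      (@interior_maximal α (lowerLimitTopology α) _ _ hcV (isOpen_Ico_lowerLimitTopology c b))

theorem interior_lowerLimitTopology_nonempty_iff (A : Set α) :
    (@interior α (lowerLimitTopology α) A).Nonempty ↔ (interior A).Nonempty where
  mp hA := (interior_nonempty_of_isOpen_lowerLimitTopology
    (@isOpen_interior α (lowerLimitTopology α) A) hA).mono
      (interior_mono (@interior_subset α (lowerLimitTopology α) A))
  mpr hA := (interior_lowerLimitTopology_nonempty_of_isOpen isOpen_interior hA).mono
    (@interior_mono α (lowerLimitTopology α) _ _ interior_subset)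

theorem residual_lowerLimitTopology : @residual α (lowerLimitTopology α) = residual α :=
  residual_eq_residual_of_interior_nonempty_iff interior_lowerLimitTopology_nonempty_iff

theorem isMeagre_halfOpenTopology_iff_isMeagre_general :
    (∀ A : Set α, @IsMeagre α (lowerLimitTopology α) A ↔ IsMeagre A) ∧
    (∀ A : Set α, A ∈ @residual α (lowerLimitTopology α) ↔ A ∈ residual α) := by
  simp only [IsMeagre, residual_lowerLimitTopology, implies_true, and_self]

end LowerLimit

/-- A subset of `ℝ` is meagre for the half-open (lower limit) topology if and only if it
is meagre for the standard topology; consequently a subset is comeagre (residual) for the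
half-open topology if and only if it is comeagre for the standard topology. -/
theorem isMeagre_halfOpenTopology_iff_isMeagre :
    (∀ A : Set ℝ, @IsMeagre ℝ halfOpenTopology A ↔ IsMeagre A) ∧
    (∀ A : Set ℝ, A ∈ @residual ℝ halfOpenTopology ↔ A ∈ residual ℝ) :=
  isMeagre_halfOpenTopology_iff_isMeagre_general
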